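/- Let g and ḡ be geodesically equivalent pseudo-Riemannian metrics on M, L = L(g,ḡ), and χ = χ1·χ2 an admissible factorisation of the characteristic polynomial of L, with deg χ1 = r. Let (x¹,…,x^r, y^{r+1},…,y^n) be local coordinates such that the distribution D1 = ker χ1(L) is spanned by ∂_{x^1},…,∂_{x^r} and D2 = ker χ2(L) is spanned by ∂_{y^{r+1}},…,∂_{y^n}. Then in these coordinates the matrix of L is block-diagonal, L = diag(L1, L2), where the entries of the r×r block L1 depend only on the x-variables and the entries of the (n−r)×(n−r) block L2 depend only on the y-variables. -/

import Mathlib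

open Matrix Polynomial Filter

noncomputable section

variable {ι : Type} [Fintype ι] [DecidableEq ι]

/-- Partial derivative of a real-valued function on `ι → ℝ` in the direction of the
`j`-th coordinate vector. -/
def pd (j : ι) (F : (ι → ℝ) → ℝ) (x : ι → ℝ) : ℝ :=
  fderiv ℝ F x (Pi.single j 1)

/-- Christoffel symbols `Γ^i_{jk}` of a metric given in local coordinates as a
matrix-valued function. -/
def christoffel (g : (ι → ℝ) → Matrix ι ι ℝ) (x : ι → ℝ) (i j k : ι) : ℝ :=
  (1 / 2) * ∑ m, (g x)⁻¹ i m *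
    (pd j (fun y => g y m k) x + pd k (fun y => g y m j) x - pd m (fun y => g y j k) x)

/-- A curve is a geodesic of `g` up to reparametrisation (an unparametrized geodesic):
`γ̈ + Γ(γ̇,γ̇) = α(t)·γ̇` for some function `α`. -/
def IsPregeodesic (g : (ι → ℝ) → Matrix ι ι ℝ) (γ : ℝ → ι → ℝ) : Prop :=
  ∃ α : ℝ → ℝ, ∀ t : ℝ, ∀ i : ι,
    deriv (fun s => deriv (fun τ => γ τ i) s) t
      + ∑ j, ∑ k, christoffel g (γ t) i j k *
          deriv (fun τ => γ τ j) t * deriv (fun τ => γ τ k) t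
      = α t * deriv (fun τ => γ τ i) t

/-- `g` is a pseudo-Riemannian metric (in local coordinates) on the set `U`. -/
structure IsMetricOn (g : (ι → ℝ) → Matrix ι ι ℝ) (U : Set (ι → ℝ)) : Prop where
  smooth : ∀ i j, ContDiffOn ℝ (⊤ : ℕ∞) (fun x => g x i j) U
  symm : ∀ x ∈ U, (g x)ᵀ = g x
  nondeg : ∀ x ∈ U, IsUnit (g x).det

/-- Two metrics are geodesically equivalent on `U`: they have the same geodesics
considered as unparametrized curves. -/
def GeodEquiv (g gb : (ι → ℝ) → Matrix ι ι ℝ) (U : Set (ι → ℝ)) : Prop :=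
  ∀ γ : ℝ → ι → ℝ, ContDiff ℝ (⊤ : ℕ∞) γ → (∀ t, γ t ∈ U) →
    (IsPregeodesic g γ ↔ IsPregeodesic gb γ)

/-- The (1,1)-tensor `L(g,ḡ)^i_j = (det ḡ / det g)^{1/(n+1)} ḡ^{ik} g_{kj}`. -/
def Lten (g gb : (ι → ℝ) → Matrix ι ι ℝ) (x : ι → ℝ) : Matrix ι ι ℝ :=
  (((gb x).det / (g x).det) ^ ((1 : ℝ) / (Fintype.card ι + 1))) • ((gb x)⁻¹ * g x)

/-- An admissible factorisation `χ = χ₁·χ₂` of the characteristic polynomial of `L`: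
both factors are monic of degree ≥ 1, have smooth coefficients, and have no common
complex root at any point of `U`. -/
structure AdmissibleFact (L : (ι → ℝ) → Matrix ι ι ℝ) (U : Set (ι → ℝ))
    (chi1 chi2 : (ι → ℝ) → Polynomial ℝ) : Prop where
  factor : ∀ x ∈ U, (L x).charpoly = chi1 x * chi2 x
  monic1 : ∀ x ∈ U, (chi1 x).Monic
  monic2 : ∀ x ∈ U, (chi2 x).Monic
  deg1 : ∀ x ∈ U, 1 ≤ (chi1 x).natDegree
  deg2 : ∀ x ∈ U, 1 ≤ (chi2 x).natDegree
  smooth1 : ∀ k, ContDiffOn ℝ (⊤ : ℕ∞) (fun x => (chi1 x).coeff k) U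
  smooth2 : ∀ k, ContDiffOn ℝ (⊤ : ℕ∞) (fun x => (chi2 x).coeff k) U
  coprime : ∀ x ∈ U, ¬ ∃ z : ℂ, aeval z (chi1 x) = 0 ∧ aeval z (chi2 x) = 0

/-- The distribution `D = ker χ(L)`. -/
def Dker (L : (ι → ℝ) → Matrix ι ι ℝ) (chi : (ι → ℝ) → Polynomial ℝ) (x : ι → ℝ) :
    Submodule ℝ (ι → ℝ) :=
  LinearMap.ker (Matrix.mulVecLin (aeval (L x) (chi x)))

/-- A distribution on `U` is integrable (involutive, which is equivalent by the
Frobenius theorem): the Lie bracket of any two smooth vector fields tangent to the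
distribution is again tangent to it. -/
def IsIntegrableDist (U : Set (ι → ℝ)) (D : (ι → ℝ) → Submodule ℝ (ι → ℝ)) : Prop :=
  ∀ u v : (ι → ℝ) → ι → ℝ, ContDiffOn ℝ (⊤ : ℕ∞) u U → ContDiffOn ℝ (⊤ : ℕ∞) v U →
    (∀ x ∈ U, u x ∈ D x) → (∀ x ∈ U, v x ∈ D x) →
    ∀ x ∈ U, (fderiv ℝ v x (u x) - fderiv ℝ u x (v x)) ∈ D x

/-- The span of the first `r` coordinate vector fields (`∂_{x^1},…,∂_{x^r}`). -/
def coordSpan (n r : ℕ) : Submodule ℝ (Fin n → ℝ) :=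
  Submodule.span ℝ {e : Fin n → ℝ | ∃ i : Fin n, (i : ℕ) < r ∧ e = Pi.single i 1}

/-- The span of the last `n - r` coordinate vector fields (`∂_{y^{r+1}},…,∂_{y^n}`). -/
def coordSpan' (n r : ℕ) : Submodule ℝ (Fin n → ℝ) :=
  Submodule.span ℝ {e : Fin n → ℝ | ∃ i : Fin n, r ≤ (i : ℕ) ∧ e = Pi.single i 1}

set_option linter.unusedSectionVars false

theorem contDiffOn_det {E : Type*} [NormedAddCommGroup E] [NormedSpace ℝ E]
    {A : E → Matrix ι ι ℝ} {U : Set E} {N : WithTop ℕ∞}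
    (hA : ∀ i j, ContDiffOn ℝ N (fun x => A x i j) U) :
    ContDiffOn ℝ N (fun x => (A x).det) U := by
  simp only [Matrix.det_apply']
  exact ContDiffOn.sum fun σ _ => contDiffOn_const.mul (contDiffOn_prod fun i _ => hA _ _)

theorem contDiffOn_matrix_inv {E : Type*} [NormedAddCommGroup E] [NormedSpace ℝ E]
    {A : E → Matrix ι ι ℝ} {U : Set E} {N : WithTop ℕ∞}
    (hA : ∀ i j, ContDiffOn ℝ N (fun x => A x i j) U)
    (hdet : ∀ x ∈ U, IsUnit (A x).det) (i j : ι) :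
    ContDiffOn ℝ N (fun x => (A x)⁻¹ i j) U := by
  have hadj : ContDiffOn ℝ N (fun x => (A x).adjugate i j) U := by
    simp only [Matrix.adjugate_apply]
    refine contDiffOn_det fun a b => ?_
    by_cases h : a = j
    · subst h
      simpa using contDiffOn_const
    · simpa [Matrix.updateRow_ne h] using hA a b
  simp only [Matrix.inv_def, Matrix.smul_apply, smul_eq_mul, Ring.inverse_eq_inv']
  exact ((contDiffOn_det hA).inv fun x hx => (hdet x hx).ne_zero).mul hadj

/-- The entrywise partial derivative of a matrix-valued function. -/
def pdMatrix (k : ι) (A : (ι → ℝ) → Matrix ι ι ℝ) (x : ι → ℝ) : Matrix ι ι ℝ :=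
  Matrix.of fun i j => pd k (fun y => A y i j) x

theorem pd_congr_on {U : Set (ι → ℝ)} (hU : IsOpen U) {F G : (ι → ℝ) → ℝ}
    (h : ∀ y ∈ U, F y = G y) {x : ι → ℝ} (hx : x ∈ U) (k : ι) : pd k F x = pd k G x := by
  have : F =ᶠ[nhds x] G := Filter.eventually_of_mem (hU.mem_nhds hx) h
  simp only [pd, this.fderiv_eq]

theorem pd_const (c : ℝ) (x : ι → ℝ) (k : ι) : pd k (fun _ => c) x = 0 := by
  simp [pd]

theorem pd_mul {F G : (ι → ℝ) → ℝ} {x : ι → ℝ} (hF : DifferentiableAt ℝ F x)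
    (hG : DifferentiableAt ℝ G x) (k : ι) :
    pd k (fun y => F y * G y) x = pd k F x * G x + F x * pd k G x := by
  simp only [pd, fderiv_fun_mul hF hG]
  simp
  ring

theorem pdMatrix_mul {A B : (ι → ℝ) → Matrix ι ι ℝ} {x : ι → ℝ}
    (hA : ∀ i j, DifferentiableAt ℝ (fun y => A y i j) x)
    (hB : ∀ i j, DifferentiableAt ℝ (fun y => B y i j) x) (k : ι) :
    pdMatrix k (fun y => A y * B y) x = pdMatrix k A x * B x + A x * pdMatrix k B x := by
  ext i j
  simp only [pdMatrix, Matrix.mul_apply, Matrix.of_apply, Matrix.add_apply]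
  rw [← Finset.sum_add_distrib]
  simp only [← pd_mul (hA _ _) (hB _ _)]
  simp only [pd]
  rw [fderiv_fun_sum fun l _ => (hA i l).fun_mul (hB l j)]
  simp

theorem pdMatrix_smul {s : (ι → ℝ) → ℝ} {A : (ι → ℝ) → Matrix ι ι ℝ} {x : ι → ℝ}
    (hs : DifferentiableAt ℝ s x)
    (hA : ∀ i j, DifferentiableAt ℝ (fun y => A y i j) x) (k : ι) :
    pdMatrix k (fun y => s y • A y) x = pd k s x • A x + s x • pdMatrix k A x := by
  ext i j
  simp only [pdMatrix, Matrix.smul_apply, Matrix.of_apply, Matrix.add_apply, smul_eq_mul]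
  exact pd_mul hs (hA i j) k

/-- Jacobi's formula for the partial derivative of a determinant. -/
theorem pd_det {A : (ι → ℝ) → Matrix ι ι ℝ} {x : ι → ℝ}
    (hA : ∀ i j, DifferentiableAt ℝ (fun y => A y i j) x) (k : ι) :
    pd k (fun y => (A y).det) x = ((A x).adjugate * pdMatrix k A x).trace := by
  let D : ContinuousMultilinearMap ℝ (fun _ : ι => ι → ℝ) ℝ :=
    { (Matrix.detRowAlternating : (ι → ℝ) [⋀^ι]→ₗ[ℝ] ℝ).toMultilinearMap with
      cont := continuous_id.matrix_det }
  have hD : ∀ M : Matrix ι ι ℝ, D M = M.det := fun M => rfl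
  have hrow : HasFDerivAt (fun y => (fun i => A y i : ι → ι → ℝ))
      (ContinuousLinearMap.pi fun i => ContinuousLinearMap.pi fun j =>
        fderiv ℝ (fun y => A y i j) x) x :=
    hasFDerivAt_pi.2 fun i => hasFDerivAt_pi.2 fun j => (hA i j).hasFDerivAt
  have h := (D.hasFDerivAt (fun i => A x i)).comp x hrow
  have h2 : pd k (fun y => (A y).det) x = _ :=
    congrArg (fun f => f (Pi.single k 1)) h.fderiv
  rw [h2, Matrix.trace_mul_comm]
  simp only [ContinuousLinearMap.comp_apply, ContinuousMultilinearMap.linearDeriv_apply,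
    Matrix.trace, Matrix.diag, Matrix.mul_apply]
  refine Finset.sum_congr rfl fun i _ => ?_
  have h3 : D (Function.update (fun i => A x i) i (pdMatrix k A x i)) =
      ((A x).updateRow i (pdMatrix k A x i)).det := rfl
  refine h3.trans ?_
  rw [← Matrix.cramer_transpose_apply, Matrix.cramer_eq_adjugate_mulVec,
    ← Matrix.adjugate_transpose]
  simp [Matrix.mulVec, dotProduct, mul_comm]

/-- The Christoffel symbols as matrices: `(Γ_k)^i_l = Γ^i_{kl}`. -/
def christoffelMatrix (g : (ι → ℝ) → Matrix ι ι ℝ) (x : ι → ℝ) (k : ι) : Matrix ι ι ℝ :=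
  Matrix.of fun i l => christoffel g x i k l

section Metric

variable {U : Set (ι → ℝ)} {g : (ι → ℝ) → Matrix ι ι ℝ} {x : ι → ℝ}

theorem IsMetricOn.apply_symm (hg : IsMetricOn g U) (hx : x ∈ U) (i j : ι) :
    g x i j = g x j i := by
  conv_lhs => rw [← hg.symm x hx]
  rfl

theorem IsMetricOn.pd_symm (hg : IsMetricOn g U) (hU : IsOpen U) (hx : x ∈ U) (k i j : ι) :
    pd k (fun y => g y i j) x = pd k (fun y => g y j i) x :=
  pd_congr_on hU (fun _ hy => hg.apply_symm hy i j) hx k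

theorem IsMetricOn.differentiableAt (hg : IsMetricOn g U) (hU : IsOpen U) (hx : x ∈ U) (i j : ι) :
    DifferentiableAt ℝ (fun y => g y i j) x :=
  ((hg.smooth i j).contDiffAt (hU.mem_nhds hx)).differentiableAt (by simp)

theorem IsMetricOn.differentiableAt_inv (hg : IsMetricOn g U) (hU : IsOpen U) (hx : x ∈ U)
    (i j : ι) : DifferentiableAt ℝ (fun y => (g y)⁻¹ i j) x :=
  ((contDiffOn_matrix_inv hg.smooth hg.nondeg i j).contDiffAt
    (hU.mem_nhds hx)).differentiableAt (by simp)

theorem IsMetricOn.differentiableAt_det (hg : IsMetricOn g U) (hU : IsOpen U) (hx : x ∈ U) :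
    DifferentiableAt ℝ (fun y => (g y).det) x :=
  ((contDiffOn_det hg.smooth).contDiffAt (hU.mem_nhds hx)).differentiableAt (by simp)

theorem IsMetricOn.christoffel_symm (hg : IsMetricOn g U) (hU : IsOpen U) (hx : x ∈ U)
    (i j k : ι) : christoffel g x i j k = christoffel g x i k j := by
  simp only [christoffel]
  congr 1
  refine Finset.sum_congr rfl fun m _ => ?_
  rw [hg.pd_symm hU hx m j k]
  ring

/-- The Levi-Civita connection is compatible with the metric. -/
theorem IsMetricOn.pdMatrix_eq (hg : IsMetricOn g U) (hU : IsOpen U) (hx : x ∈ U) (k : ι) :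
    pdMatrix k g x = (christoffelMatrix g x k)ᵀ * g x + g x * christoffelMatrix g x k := by
  let C : Matrix ι ι ℝ := Matrix.of fun m l =>
    pd k (fun y => g y m l) x + pd l (fun y => g y m k) x - pd m (fun y => g y k l) x
  have hΓ : christoffelMatrix g x k = (1 / 2 : ℝ) • ((g x)⁻¹ * C) := by
    ext i l
    simp [christoffelMatrix, christoffel, C, Matrix.mul_apply]
  have h1 : g x * christoffelMatrix g x k = (1 / 2 : ℝ) • C := by
    rw [hΓ, Matrix.mul_smul, Matrix.mul_nonsing_inv_cancel_left _ _ (hg.nondeg x hx)]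
  have h2 : (christoffelMatrix g x k)ᵀ * g x = (1 / 2 : ℝ) • Cᵀ := by
    rw [← Matrix.transpose_smul, ← h1, Matrix.transpose_mul, hg.symm x hx]
  rw [h1, h2]
  ext i l
  simp only [pdMatrix, C, Matrix.of_apply, Matrix.add_apply, Matrix.smul_apply,
    Matrix.transpose_apply, smul_eq_mul]
  rw [hg.pd_symm hU hx k l i, hg.pd_symm hU hx l k i, hg.pd_symm hU hx i k l]
  ring

theorem IsMetricOn.pdMatrix_inv (hg : IsMetricOn g U) (hU : IsOpen U) (hx : x ∈ U) (k : ι) :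
    pdMatrix k (fun y => (g y)⁻¹) x =
      -(christoffelMatrix g x k * (g x)⁻¹) - (g x)⁻¹ * (christoffelMatrix g x k)ᵀ := by
  have h0 : pdMatrix k (fun y => (g y)⁻¹ * g y) x = 0 := by
    ext i j
    have : pd k (fun y => ((g y)⁻¹ * g y) i j) x = pd k (fun _ => (1 : Matrix ι ι ℝ) i j) x :=
      pd_congr_on hU (fun y hy => by rw [Matrix.nonsing_inv_mul _ (hg.nondeg y hy)]) hx k
    simpa [pdMatrix, pd_const] using this
  rw [pdMatrix_mul (hg.differentiableAt_inv hU hx) (hg.differentiableAt hU hx),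
    hg.pdMatrix_eq hU hx] at h0
  have hu := hg.nondeg x hx
  have h1 := congrArg (· * (g x)⁻¹) h0
  simp only [add_mul, mul_add, zero_mul, Matrix.mul_nonsing_inv_cancel_right _ _ hu,
    Matrix.nonsing_inv_mul_cancel_left _ _ hu, ← Matrix.mul_assoc] at h1
  rw [← sub_eq_zero, ← h1]
  abel

theorem IsMetricOn.pd_det (hg : IsMetricOn g U) (hU : IsOpen U) (hx : x ∈ U) (k : ι) :
    pd k (fun y => (g y).det) x = 2 * (g x).det * (christoffelMatrix g x k).trace := by
  have hadj : (g x).adjugate * g x = (g x).det • 1 := Matrix.adjugate_mul _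
  rw [_root_.pd_det (hg.differentiableAt hU hx), hg.pdMatrix_eq hU hx, Matrix.mul_add,
    Matrix.trace_add, ← Matrix.mul_assoc, ← Matrix.mul_assoc, hadj, Matrix.trace_mul_cycle,
    Matrix.mul_adjugate]
  simp
  ring

end Metric

/-- Solutions of an autonomous smooth ODE are smooth. -/
theorem contDiffOn_of_hasDerivAt_comp {E : Type*} [NormedAddCommGroup E] [NormedSpace ℝ E]
    {f : E → E} {W : Set E} (hf : ContDiffOn ℝ (⊤ : ℕ∞) f W) {β : ℝ → E} {I : Set ℝ}
    (hI : IsOpen I) (hβ : ∀ t ∈ I, HasDerivAt β (f (β t)) t) (hW : ∀ t ∈ I, β t ∈ W) :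
    ContDiffOn ℝ (⊤ : ℕ∞) β I := by
  refine contDiffOn_infty.2 fun m => ?_
  induction m with
  | zero =>
    exact contDiffOn_zero.2 fun t ht => (hβ t ht).continuousAt.continuousWithinAt
  | succ m ih =>
    rw [Nat.cast_add, Nat.cast_one, contDiffOn_succ_iff_deriv_of_isOpen hI]
    refine ⟨fun t ht => (hβ t ht).differentiableAt.differentiableWithinAt, by simp, ?_⟩
    exact ((contDiffOn_infty.1 hf m).comp ih hW).congr fun t ht => (hβ t ht).deriv

section Geodesics

variable {U : Set (ι → ℝ)} {g gb : (ι → ℝ) → Matrix ι ι ℝ} {x : ι → ℝ}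

theorem contDiffOn_pd {F : (ι → ℝ) → ℝ} (hU : IsOpen U) (hF : ContDiffOn ℝ (⊤ : ℕ∞) F U)
    (k : ι) : ContDiffOn ℝ (⊤ : ℕ∞) (pd k F) U :=
  (hF.fderiv_of_isOpen hU (by simp)).clm_apply contDiffOn_const

theorem IsMetricOn.contDiffOn_christoffel (hg : IsMetricOn g U) (hU : IsOpen U) (i j k : ι) :
    ContDiffOn ℝ (⊤ : ℕ∞) (fun x => christoffel g x i j k) U :=
  contDiffOn_const.mul <| ContDiffOn.sum fun m _ =>
    (contDiffOn_matrix_inv hg.smooth hg.nondeg i m).mul <|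
      ((contDiffOn_pd hU (hg.smooth _ _) _).add (contDiffOn_pd hU (hg.smooth _ _) _)).sub
        (contDiffOn_pd hU (hg.smooth _ _) _)

/-- The geodesic spray of `g`, as a vector field on `(ι → ℝ) × (ι → ℝ)`. -/
def geodesicSpray (g : (ι → ℝ) → Matrix ι ι ℝ) (p : (ι → ℝ) × (ι → ℝ)) :
    (ι → ℝ) × (ι → ℝ) :=
  (p.2, fun i => -∑ j, ∑ k, christoffel g p.1 i j k * p.2 j * p.2 k)

theorem IsMetricOn.contDiffOn_geodesicSpray (hg : IsMetricOn g U) (hU : IsOpen U) :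
    ContDiffOn ℝ (⊤ : ℕ∞) (geodesicSpray g) (U ×ˢ Set.univ) := by
  refine contDiffOn_snd.prodMk (contDiffOn_pi.2 fun i => ContDiffOn.neg <|
    ContDiffOn.sum fun j _ => ContDiffOn.sum fun k _ => ContDiffOn.mul (ContDiffOn.mul ?_ ?_) ?_)
  · exact (hg.contDiffOn_christoffel hU i j k).comp contDiffOn_fst fun p hp => hp.1
  · exact contDiffOn_pi.1 contDiffOn_snd j
  · exact contDiffOn_pi.1 contDiffOn_snd k

theorem IsMetricOn.exists_isPregeodesic (hg : IsMetricOn g U) (hU : IsOpen U) (hx : x ∈ U)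
    (v : ι → ℝ) :
    ∃ γ : ℝ → ι → ℝ, ContDiff ℝ (⊤ : ℕ∞) γ ∧ (∀ t, γ t ∈ U) ∧ IsPregeodesic g γ ∧ γ 0 = x ∧
      ∃ c : ℝ, c ≠ 0 ∧ ∀ i, deriv (fun τ => γ τ i) 0 = c * v i := by
  have hWo : IsOpen (U ×ˢ (Set.univ : Set (ι → ℝ))) := hU.prod isOpen_univ
  have hxW : (x, v) ∈ U ×ˢ (Set.univ : Set (ι → ℝ)) := ⟨hx, trivial⟩
  have hf := hg.contDiffOn_geodesicSpray hU
  obtain ⟨β, hβ0, ε, hε, hβ⟩ :=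
    ((hf.contDiffAt (hWo.mem_nhds hxW)).of_le
      (by exact_mod_cast le_top)).exists_forall_mem_closedBall_exists_eq_forall_mem_Ioo_hasDerivAt₀ 0
  simp only [zero_sub, zero_add] at hβ
  have hcont : ContinuousAt β 0 := (hβ 0 ⟨by linarith, hε⟩).continuousAt
  obtain ⟨δ₀, hδ₀, hball⟩ := Metric.eventually_nhds_iff.1
    (hcont.eventually_mem (hWo.mem_nhds (by rw [hβ0]; exact hxW)))
  obtain ⟨δ, hδ, hδε, hδδ₀⟩ : ∃ δ > 0, δ ≤ ε ∧ δ ≤ δ₀ :=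
    ⟨min ε δ₀, lt_min hε hδ₀, min_le_left _ _, min_le_right _ _⟩
  have hβ' : ∀ t ∈ Set.Ioo (-δ) δ, HasDerivAt β (geodesicSpray g (β t)) t := fun t ht =>
    hβ t ⟨by linarith [ht.1], by linarith [ht.2]⟩
  have hβW : ∀ t ∈ Set.Ioo (-δ) δ, β t ∈ U ×ˢ (Set.univ : Set (ι → ℝ)) := fun t ht =>
    hball (by rw [Real.dist_eq, sub_zero]; exact (abs_lt.2 ht).trans_le hδδ₀)
  have hsm := contDiffOn_of_hasDerivAt_comp hf isOpen_Ioo hβ' hβW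
  let σ : ℝ → ℝ := fun t => δ / 2 * Real.arctan t
  let σ' : ℝ → ℝ := fun t => δ / 2 * (1 / (1 + t ^ 2))
  have hσ' : ∀ t, σ' t ≠ 0 := fun t => by positivity
  have hσ : ∀ t, HasDerivAt σ (σ' t) t := fun t =>
    (Real.hasDerivAt_arctan t).const_mul (δ / 2)
  have hσ'd : ∀ t, HasDerivAt σ' (deriv σ' t) t := fun t => by
    have : Differentiable ℝ σ' := by
      have : ∀ t : ℝ, 1 + t ^ 2 ≠ 0 := fun t => by positivity
      fun_prop (disch := assumption)
    exact (this t).hasDerivAt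
  have hσI : ∀ t, σ t ∈ Set.Ioo (-δ) δ := fun t => by
    have h1 := Real.arctan_lt_pi_div_two t
    have h2 := Real.neg_pi_div_two_lt_arctan t
    have h3 := Real.pi_lt_four
    constructor <;> simp only [σ] <;> nlinarith
  have hcomp : ∀ t, HasDerivAt (fun s => β (σ s)) (σ' t • geodesicSpray g (β (σ t))) t :=
    fun t => (hβ' _ (hσI t)).scomp t (hσ t)
  have hγ : ∀ t i, HasDerivAt (fun s => (β (σ s)).1 i) (σ' t * (β (σ t)).2 i) t := fun t i =>
    hasDerivAt_pi.1 (hasFDerivAt_fst.comp_hasDerivAt t (hcomp t)) i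
  have hγ' : ∀ t i, HasDerivAt (fun s => (β (σ s)).2 i) (σ' t * (geodesicSpray g (β (σ t))).2 i) t :=
    fun t i => hasDerivAt_pi.1 (hasFDerivAt_snd.comp_hasDerivAt t (hcomp t)) i
  refine ⟨fun t => (β (σ t)).1, ?_, fun t => (hβW _ (hσI t)).1, ?_, ?_, σ' 0, hσ' 0, fun i => ?_⟩
  · have hσc : ContDiff ℝ (⊤ : ℕ∞) σ := contDiff_const.mul Real.contDiff_arctan
    exact contDiff_fst.comp (hsm.comp_contDiff hσc hσI)
  · refine ⟨fun t => deriv σ' t / σ' t, fun t i => ?_⟩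
    simp only [fun t i => (hγ t i).deriv]
    rw [((hσ'd t).fun_mul (hγ' t i)).deriv]
    have hsum : ∑ j, ∑ k, christoffel g (β (σ t)).1 i j k * (σ' t * (β (σ t)).2 j) *
        (σ' t * (β (σ t)).2 k) = -(σ' t ^ 2 * (geodesicSpray g (β (σ t))).2 i) := by
      simp only [geodesicSpray, mul_neg, neg_neg, Finset.mul_sum]
      refine Finset.sum_congr rfl fun j _ => Finset.sum_congr rfl fun k _ => ?_
      ring
    rw [hsum]
    have := hσ' t
    field_simp
    ring
  · simp [σ, hβ0]
  · rw [(hγ 0 i).deriv]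
    simp [σ, hβ0]

/-- The difference of the Levi-Civita connections of geodesically equivalent metrics sends every
`v` to a multiple of `v`. -/
theorem GeodEquiv.exists_christoffel_sub (hU : IsOpen U) (hg : IsMetricOn g U)
    (hge : GeodEquiv g gb U) (hx : x ∈ U) (v : ι → ℝ) :
    ∃ l : ℝ, ∀ i, ∑ j, ∑ k, (christoffel gb x i j k - christoffel g x i j k) * v j * v k
      = l * v i := by
  obtain ⟨γ, hγ, hγU, hpre, hγ0, c, hc, hcv⟩ := hg.exists_isPregeodesic hU hx v
  obtain ⟨a, ha⟩ := hpre
  obtain ⟨b, hb⟩ := (hge γ hγ hγU).1 ⟨a, ha⟩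
  refine ⟨(b 0 - a 0) / c, fun i => ?_⟩
  have h1 := ha 0 i
  have h2 := hb 0 i
  simp only [hcv, hγ0] at h1 h2
  have hsum : ∀ T : ι → ι → ℝ, ∑ j, ∑ k, T j k * (c * v j) * (c * v k) =
      c ^ 2 * ∑ j, ∑ k, T j k * v j * v k := fun T => by
    simp only [Finset.mul_sum]
    refine Finset.sum_congr rfl fun j _ => Finset.sum_congr rfl fun k _ => ?_
    ring
  rw [hsum] at h1 h2
  simp only [sub_mul, Finset.sum_sub_distrib]
  field_simp
  apply mul_left_cancel₀ hc
  linear_combination h2 - h1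

end Geodesics

/-- A symmetric bilinear map `T` for which `T(v,v)` is always proportional to `v` is of the form
`T(v,w) = φ(v) w + φ(w) v`. -/
theorem exists_form_of_diagonal_proportional {T : ι → ι → ι → ℝ} (hsymm : ∀ i j k, T i j k = T i k j)
    (hT : ∀ v : ι → ℝ, ∃ l : ℝ, ∀ i, ∑ j, ∑ k, T i j k * v j * v k = l * v i) :
    ∃ φ : ι → ℝ, ∀ i j k,
      T i j k = (if i = j then φ k else 0) + (if i = k then φ j else 0) := by
  have hdiag : ∀ i j, i ≠ j → T i j j = 0 := fun i j hij => by
    obtain ⟨l, hl⟩ := hT (Pi.single j 1)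
    simpa [Pi.single_apply, hij] using hl i
  have hpair : ∀ j k, j ≠ k → ∀ s : ℝ, ∃ l : ℝ, ∀ i,
      T i j j + 2 * s * T i j k + s ^ 2 * T i k k =
        l * ((if i = j then 1 else 0) + s * (if i = k then 1 else 0)) := fun j k _ s => by
    obtain ⟨l, hl⟩ := hT (Pi.single j 1 + s • Pi.single k 1)
    refine ⟨l, fun i => ?_⟩
    have := hl i
    simp only [Pi.add_apply, Pi.smul_apply, Pi.single_apply, smul_eq_mul, mul_add, add_mul,
      Finset.sum_add_distrib, mul_ite, ite_mul, mul_one, mul_zero, zero_mul, Finset.sum_ite_eq',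
      Finset.mem_univ, if_true] at this ⊢
    rw [hsymm i k j] at this
    linear_combination this
  have hoff : ∀ i j k, i ≠ j → i ≠ k → T i j k = 0 := fun i j k hij hik => by
    by_cases hjk : j = k
    · subst hjk
      exact hdiag i j hij
    obtain ⟨l, hl⟩ := hpair j k hjk 1
    have := hl i
    simp only [hdiag i j hij, hdiag i k hik, hij, hik, if_false] at this
    linarith
  have hmix : ∀ j k, j ≠ k → T k j k = T j j j / 2 := fun j k hjk => by
    obtain ⟨l, hl⟩ := hpair j k hjk 1
    obtain ⟨l', hl'⟩ := hpair j k hjk (-1)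
    have h1 := hl j
    have h2 := hl k
    have h3 := hl' j
    have h4 := hl' k
    simp only [hdiag j k hjk, hdiag k j hjk.symm, hjk, hjk.symm, if_true, if_false] at h1 h2 h3 h4
    linarith
  refine ⟨fun j => T j j j / 2, fun i j k => ?_⟩
  by_cases hij : i = j <;> by_cases hik : i = k
  · subst hij hik
    simp
  · subst hij
    simp only [if_true, hik, if_false, add_zero]
    rw [hsymm, hmix k i (Ne.symm hik)]
  · subst hik
    simp only [if_true, hij, if_false, zero_add]
    exact hmix j i (Ne.symm hij)
  · simp [hij, hik, hoff i j k hij hik]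

section Lten

variable {U : Set (ι → ℝ)} {g gb : (ι → ℝ) → Matrix ι ι ℝ} {x : ι → ℝ}

/-- The partial derivatives of the conformal factor in `L(g,ḡ)`. -/
theorem pd_det_ratio_rpow (hU : IsOpen U) (hg : IsMetricOn g U) (hgb : IsMetricOn gb U)
    (hx : x ∈ U) (p : ℝ) :
    DifferentiableAt ℝ (fun y => ((gb y).det / (g y).det) ^ p) x ∧
    ∀ k, pd k (fun y => ((gb y).det / (g y).det) ^ p) x =
      2 * p * ((gb x).det / (g x).det) ^ p *
        ((christoffelMatrix gb x k).trace - (christoffelMatrix g x k).trace) := by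
  have hd := (hg.nondeg x hx).ne_zero
  have hdb := (hgb.nondeg x hx).ne_zero
  have hq : (gb x).det / (g x).det ≠ 0 := div_ne_zero hdb hd
  have hqd : DifferentiableAt ℝ (fun y => (gb y).det / (g y).det) x := by
    simp only [div_eq_mul_inv]
    exact (hgb.differentiableAt_det hU hx).fun_mul ((hg.differentiableAt_det hU hx).fun_inv hd)
  have hs := hqd.hasFDerivAt.rpow_const (p := p) (Or.inl hq)
  refine ⟨hs.differentiableAt, fun k => ?_⟩
  have hmul : pd k (fun y => (gb y).det) x =
      pd k (fun y => (gb y).det / (g y).det) x * (g x).det +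
        (gb x).det / (g x).det * pd k (fun y => (g y).det) x := by
    rw [← pd_mul hqd (hg.differentiableAt_det hU hx)]
    exact pd_congr_on hU (fun y hy => (div_mul_cancel₀ _ (hg.nondeg y hy).ne_zero).symm) hx k
  rw [hg.pd_det hU hx, hgb.pd_det hU hx] at hmul
  have hpq : pd k (fun y => (gb y).det / (g y).det) x = 2 * ((gb x).det / (g x).det) *
      ((christoffelMatrix gb x k).trace - (christoffelMatrix g x k).trace) := by
    apply mul_right_cancel₀ hd
    field_simp at hmul ⊢
    linear_combination -hmul
  have hps : pd k (fun y => ((gb y).det / (g y).det) ^ p) x =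
      p * ((gb x).det / (g x).det) ^ (p - 1) *
        pd k (fun y => (gb y).det / (g y).det) x := by
    simp only [pd, hs.fderiv]
    simp
  rw [hps, hpq, Real.rpow_sub_one hq]
  field_simp

/-- The geodesic compatibility equation for `L(g,ḡ)`. -/
theorem GeodEquiv.exists_pdMatrix_Lten (hU : IsOpen U) (hg : IsMetricOn g U)
    (hgb : IsMetricOn gb U) (hge : GeodEquiv g gb U) (hx : x ∈ U) :
    ∃ lam mu : ι → ℝ, ∀ k, pdMatrix k (Lten g gb) x =
      Lten g gb x * christoffelMatrix g x k - christoffelMatrix g x k * Lten g gb x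
        + Matrix.vecMulVec (Pi.single k 1) lam + Matrix.vecMulVec mu (g x k) := by
  obtain ⟨φ, hφ⟩ := exists_form_of_diagonal_proportional
    (T := fun i j k => christoffel gb x i j k - christoffel g x i j k)
    (fun i j k => by rw [hg.christoffel_symm hU hx, hgb.christoffel_symm hU hx])
    (hge.exists_christoffel_sub hU hg hx)
  have hT : ∀ k, christoffelMatrix gb x k =
      christoffelMatrix g x k + Matrix.vecMulVec (Pi.single k 1) φ + φ k • 1 := fun k => by
    ext i l
    have := hφ i k l
    simp only [christoffelMatrix, Matrix.of_apply, Matrix.add_apply, Matrix.vecMulVec_apply,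
      Pi.single_apply, Matrix.smul_apply, Matrix.one_apply, smul_eq_mul, ite_mul, one_mul,
      zero_mul, mul_ite, mul_one, mul_zero]
    linarith
  obtain ⟨hsd, hs⟩ := pd_det_ratio_rpow hU hg hgb hx ((1 : ℝ) / (Fintype.card ι + 1))
  set p : ℝ := (1 : ℝ) / (Fintype.card ι + 1) with hp
  have hs' : ∀ k, pd k (fun y => ((gb y).det / (g y).det) ^ p) x =
      2 * φ k * ((gb x).det / (g x).det) ^ p := fun k => by
    have htr : (christoffelMatrix gb x k).trace - (christoffelMatrix g x k).trace =
        (Fintype.card ι + 1) * φ k := by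
      rw [hT k]
      simp [Matrix.trace_add, Matrix.trace_vecMulVec]
      ring
    have hn : (Fintype.card ι + 1 : ℝ) ≠ 0 := by positivity
    rw [hs, htr, hp]
    field_simp
  have hprod : ∀ k, pdMatrix k (Lten g gb) x = _ := fun k =>
    pdMatrix_smul (k := k) hsd (A := fun y => (gb y)⁻¹ * g y) (fun i j => by
      simp only [Matrix.mul_apply]
      exact DifferentiableAt.fun_sum fun l _ =>
        (hgb.differentiableAt_inv hU hx i l).fun_mul (hg.differentiableAt hU hx l j))
  set s : ℝ := ((gb x).det / (g x).det) ^ p with hsdef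
  have hL : Lten g gb x = s • ((gb x)⁻¹ * g x) := rfl
  refine ⟨-(φ ᵥ* Lten g gb x), -(s • ((gb x)⁻¹ *ᵥ φ)), fun k => ?_⟩
  have hvec : (gb x)⁻¹ * (Matrix.vecMulVec (Pi.single k 1) φ)ᵀ * g x =
      Matrix.vecMulVec ((gb x)⁻¹ *ᵥ φ) (g x k) := by
    rw [Matrix.transpose_vecMulVec, Matrix.mul_vecMulVec, Matrix.vecMulVec_mul,
      Matrix.single_one_vecMul]
    rfl
  rw [hprod k, hs', pdMatrix_mul (hgb.differentiableAt_inv hU hx) (hg.differentiableAt hU hx),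
    hg.pdMatrix_eq hU hx, hgb.pdMatrix_inv hU hx, hT k, Matrix.vecMulVec_neg,
    Matrix.neg_vecMulVec, Matrix.smul_vecMulVec, ← hvec, ← Matrix.vecMulVec_mul, hL]
  simp only [Matrix.transpose_add, Matrix.transpose_smul, Matrix.transpose_one, Matrix.mul_add,
    Matrix.add_mul, Matrix.sub_mul, Matrix.neg_mul, Matrix.smul_mul, Matrix.mul_smul, Matrix.one_mul,
    Matrix.mul_one, Matrix.mul_assoc, smul_add, smul_sub, smul_neg, mul_smul, two_mul, add_smul]
  rw [smul_comm (φ k) s]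
  abel

theorem mul_Lten_symm (hg : IsMetricOn g U) (hgb : IsMetricOn gb U) (hx : x ∈ U) :
    (g x * Lten g gb x)ᵀ = g x * Lten g gb x := by
  simp only [Lten, Matrix.mul_smul, Matrix.transpose_smul, Matrix.transpose_mul,
    Matrix.transpose_nonsing_inv, hg.symm x hx, hgb.symm x hx, Matrix.mul_assoc]

/-- The Nijenhuis torsion vanishes for an operator that satisfies the geodesic compatibility
equation. -/
theorem nijenhuis_eq_zero {L g : Matrix ι ι ℝ} {dL Γ : ι → Matrix ι ι ℝ} {lam mu : ι → ℝ}
    (hΓ : ∀ i j k, Γ j i k = Γ k i j) (hgL : (g * L)ᵀ = g * L) (hg : gᵀ = g)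
    (hdL : ∀ k, dL k = L * Γ k - Γ k * L + Matrix.vecMulVec (Pi.single k 1) lam
      + Matrix.vecMulVec mu (g k)) (i j k : ι) :
    ∑ l, L l j * dL l i k - ∑ l, L l k * dL l i j
      - ∑ l, L i l * dL j l k + ∑ l, L i l * dL k l j = 0 := by
  have hgs : ∀ a b, g a b = g b a := fun a b => congrFun (congrFun hg.symm a) b
  have hS : ∑ l, L l j * g l k = ∑ l, L l k * g l j := by
    have := congrFun (congrFun hgL j) k
    simp only [Matrix.transpose_apply, Matrix.mul_apply] at this
    simpa only [mul_comm, hgs] using this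
  let A : ι → ι → ℝ := fun j k => ∑ l, ∑ m, L l j * L i m * Γ l m k
  let B : ι → ι → ℝ := fun j k => ∑ l, ∑ m, L l j * Γ l i m * L m k
  let C : ι → ι → ℝ := fun j k => ∑ l, ∑ m, L i l * L l m * Γ j m k
  have hB : B k j = B j k := by
    simp only [B]
    rw [Finset.sum_comm]
    refine Finset.sum_congr rfl fun l _ => Finset.sum_congr rfl fun m _ => ?_
    rw [hΓ]
    ring
  have hC : C k j = C j k := by simp only [C, hΓ _ k j]
  have h1 : ∀ j k, ∑ l, L l j * dL l i k =
      A j k - B j k + L i j * lam k + mu i * ∑ l, L l j * g l k := fun j k => by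
    simp only [hdL, Matrix.add_apply, Matrix.sub_apply, Matrix.vecMulVec_apply, Matrix.mul_apply,
      mul_add, mul_sub, Finset.sum_add_distrib, Finset.sum_sub_distrib, A, B, Finset.mul_sum,
      Pi.single_apply, ite_mul, one_mul, zero_mul, mul_ite, mul_zero, Finset.sum_ite_eq,
      Finset.mem_univ, if_true]
    simp only [mul_assoc, mul_left_comm]
  have h2 : ∀ j k, ∑ l, L i l * dL j l k =
      C j k - A k j + L i j * lam k + (∑ l, L i l * mu l) * g j k := fun j k => by
    have hA : A k j = ∑ l, ∑ m, L i l * (Γ j l m * L m k) := by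
      simp only [A]
      rw [Finset.sum_comm]
      refine Finset.sum_congr rfl fun l _ => Finset.sum_congr rfl fun m _ => ?_
      rw [hΓ]
      ring
    simp only [hdL, hA, Matrix.add_apply, Matrix.sub_apply, Matrix.vecMulVec_apply,
      Matrix.mul_apply, mul_add, mul_sub, Finset.sum_add_distrib, Finset.sum_sub_distrib, C, Finset.mul_sum,
      Pi.single_apply, ite_mul, one_mul, zero_mul, mul_ite, mul_zero, Finset.sum_ite_eq',
      Finset.mem_univ, if_true, Finset.sum_mul]
    simp only [mul_assoc]
  rw [h1, h1, h2, h2, hS, hB, hC, hgs k j]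
  ring

end Lten

section Splitting

theorem aeval_commute {A B : Matrix ι ι ℝ} (h : Commute A B) (q : Polynomial ℝ) :
    Commute (aeval A q) B := by
  induction q using Polynomial.induction_on' with
  | add p q hp hq => simpa using hp.add_left hq
  | monomial n a =>
    rw [aeval_monomial]
    exact (Algebra.commute_algebraMap_left a B).mul_left (h.pow_left n)

variable {p : ι → Prop} {L : Matrix ι ι ℝ} {q₁ q₂ : Polynomial ℝ}

theorem apply_eq_zero_of_ker_aeval
    (hq : ∀ v, aeval L q₁ *ᵥ v = 0 ↔ ∀ i, ¬ p i → v i = 0) {i j : ι} (hi : ¬ p i) (hj : p j) :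
    L i j = 0 := by
  have he : aeval L q₁ *ᵥ Pi.single j 1 = 0 :=
    (hq _).2 fun a ha => Pi.single_eq_of_ne (by rintro rfl; exact ha hj) _
  have hLe : aeval L q₁ *ᵥ (L *ᵥ Pi.single j 1) = 0 := by
    rw [Matrix.mulVec_mulVec, (aeval_commute (Commute.refl L) q₁).eq, ← Matrix.mulVec_mulVec, he,
      Matrix.mulVec_zero]
  simpa using (hq _).1 hLe i hi

/-- An intertwiner from the second block to the first block vanishes. -/
theorem intertwiner_eq_zero
    (hq : ∀ v, aeval L q₂ *ᵥ v = 0 ↔ ∀ i, p i → v i = 0) {Q : Matrix ι ι ℝ}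
    (hLQ : Commute L Q) {i m : ι} (hi : p i) (hm : ¬ p m) : Q i m = 0 := by
  have he : aeval L q₂ *ᵥ Pi.single m 1 = 0 :=
    (hq _).2 fun a ha => Pi.single_eq_of_ne (by rintro rfl; exact hm ha) _
  have hQe : aeval L q₂ *ᵥ (Q *ᵥ Pi.single m 1) = 0 := by
    rw [Matrix.mulVec_mulVec, (aeval_commute hLQ q₂).eq, ← Matrix.mulVec_mulVec, he,
      Matrix.mulVec_zero]
  simpa using (hq _).1 hQe i hi

/-- If the kernels of `χ₁(L)` and `χ₂(L)` are complementary coordinate planes, then `L` is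
block-diagonal and its first block depends only on the first group of coordinates. -/
theorem GeodEquiv.Lten_block {U : Set (ι → ℝ)} {g gb : (ι → ℝ) → Matrix ι ι ℝ}
    (hU : IsOpen U) (hg : IsMetricOn g U) (hgb : IsMetricOn gb U) (hge : GeodEquiv g gb U)
    {chi1 chi2 : (ι → ℝ) → Polynomial ℝ}
    (h₁ : ∀ x ∈ U, ∀ v, aeval (Lten g gb x) (chi1 x) *ᵥ v = 0 ↔ ∀ i, ¬ p i → v i = 0)
    (h₂ : ∀ x ∈ U, ∀ v, aeval (Lten g gb x) (chi2 x) *ᵥ v = 0 ↔ ∀ i, p i → v i = 0)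
    {x : ι → ℝ} (hx : x ∈ U) :
    (∀ i j, ¬ p i → p j → Lten g gb x i j = 0) ∧
    (∀ i j, p i → ¬ p j → Lten g gb x i j = 0) ∧
    ∀ i j m, p i → p j → ¬ p m → pd m (fun y => Lten g gb y i j) x = 0 := by
  classical
  have hb₁ : ∀ y ∈ U, ∀ i j, ¬ p i → p j → Lten g gb y i j = 0 := fun y hy i j hi hj =>
    apply_eq_zero_of_ker_aeval (h₁ y hy) hi hj
  have hb₂ : ∀ y ∈ U, ∀ i j, p i → ¬ p j → Lten g gb y i j = 0 := fun y hy i j hi hj =>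
    apply_eq_zero_of_ker_aeval (p := fun i => ¬ p i) (by simpa using h₂ y hy) (by simpa using hi) hj
  refine ⟨hb₁ x hx, hb₂ x hx, fun i j m hi hj hm => ?_⟩
  have hpd₂ : ∀ k a b, p a → ¬ p b → pd k (fun y => Lten g gb y a b) x = 0 := fun k a b ha hb => by
    rw [pd_congr_on hU (fun y hy => hb₂ y hy a b ha hb) hx, pd_const]
  obtain ⟨lam, mu, hL⟩ := hge.exists_pdMatrix_Lten hU hg hgb hx
  have hN : ∀ i j k, _ := nijenhuis_eq_zero (fun i j k => hg.christoffel_symm hU hx i j k)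
    (mul_Lten_symm hg hgb hx) (hg.symm x hx) hL
  have hkey : ∀ a b, p a → ¬ p b →
      ∑ l, Lten g gb x a l * pd b (fun y => Lten g gb y l j) x =
        ∑ l, pd l (fun y => Lten g gb y a j) x * Lten g gb x l b := fun a b ha hb => by
    have h0 := hN a j b
    have e1 : ∑ l, Lten g gb x l j * pdMatrix l (Lten g gb) x a b = 0 :=
      Finset.sum_eq_zero fun l _ => mul_eq_zero_of_right _ (hpd₂ l a b ha hb)
    have e2 : ∑ l, Lten g gb x a l * pdMatrix j (Lten g gb) x l b = 0 :=
      Finset.sum_eq_zero fun l _ => by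
        by_cases hl : p l
        · exact mul_eq_zero_of_right _ (hpd₂ j l b hl hb)
        · rw [hb₂ x hx a l ha hl, zero_mul]
    rw [e1, e2] at h0
    simp only [pdMatrix, Matrix.of_apply] at h0
    simp only [mul_comm (pd _ _ _)]
    linarith
  let Q : Matrix ι ι ℝ := Matrix.of fun a b =>
    if p a ∧ ¬ p b then pd b (fun y => Lten g gb y a j) x else 0
  have hQ : Commute (Lten g gb x) Q := by
    ext a b
    simp only [Matrix.mul_apply, Q, Matrix.of_apply]
    by_cases ha : p a <;> by_cases hb : p b
    · rw [Finset.sum_eq_zero fun l _ => by simp [hb], Finset.sum_eq_zero fun l _ => ?_]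
      by_cases hl : p l
      · simp [hl]
      · rw [hb₁ x hx l b hl hb, mul_zero]
    · convert hkey a b ha hb using 2 with l _ l _
      · by_cases hl : p l
        · simp [hl, hb]
        · simp [hb₂ x hx a l ha hl]
      · by_cases hl : p l
        · simp [hb₂ x hx l b hl hb]
        · simp [hl, ha]
    · simp [ha, hb]
    · rw [Finset.sum_eq_zero fun l _ => ?_, Finset.sum_eq_zero fun l _ => by simp [ha]]
      by_cases hl : p l
      · rw [hb₁ x hx a l ha hl, zero_mul]
      · simp [hl]
  have := intertwiner_eq_zero (h₂ x hx) hQ hi hm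
  simpa [Q, hi, hm] using this

theorem mem_span_single_iff (p : ι → Prop) (v : ι → ℝ) :
    v ∈ Submodule.span ℝ {e : ι → ℝ | ∃ i, p i ∧ e = Pi.single i 1} ↔ ∀ i, ¬ p i → v i = 0 := by
  constructor
  · intro hv i hi
    have hle : Submodule.span ℝ {e : ι → ℝ | ∃ i, p i ∧ e = Pi.single i 1} ≤
        LinearMap.ker (LinearMap.proj i : (ι → ℝ) →ₗ[ℝ] ℝ) := by
      rw [Submodule.span_le]
      rintro _ ⟨j, hj, rfl⟩
      have hij : i ≠ j := fun h => hi (h ▸ hj)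
      simp [hij]
    exact hle hv
  · intro hv
    rw [pi_eq_sum_univ' v]
    refine Submodule.sum_mem _ fun i _ => ?_
    by_cases hi : p i
    · refine Submodule.smul_mem _ _ (Submodule.subset_span ⟨i, hi, ?_⟩)
      ext j
      simp [Pi.single_apply, eq_comm]
    · simp [hv i hi]

end Splitting

theorem stmt1 {n r : ℕ} (hr : r ≤ n) (U : Set (Fin n → ℝ)) (hU : IsOpen U)
    (g gb : (Fin n → ℝ) → Matrix (Fin n) (Fin n) ℝ)
    (hg : IsMetricOn g U) (hgb : IsMetricOn gb U)
    (hge : GeodEquiv g gb U)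
    (chi1 chi2 : (Fin n → ℝ) → Polynomial ℝ)
    (hfac : AdmissibleFact (Lten g gb) U chi1 chi2)
    (hdeg : ∀ x ∈ U, (chi1 x).natDegree = r)
    -- the coordinates are adapted: `D₁ = ker χ₁(L)` is spanned by `∂_{x^1},…,∂_{x^r}`
    -- and `D₂ = ker χ₂(L)` is spanned by `∂_{y^{r+1}},…,∂_{y^n}`
    (hD1 : ∀ x ∈ U, Dker (Lten g gb) chi1 x = coordSpan n r)
    (hD2 : ∀ x ∈ U, Dker (Lten g gb) chi2 x = coordSpan' n r) :
    ∀ x ∈ U,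
      -- `L` is block-diagonal
      (∀ i j : Fin n, (((i : ℕ) < r ∧ r ≤ (j : ℕ)) ∨ (r ≤ (i : ℕ) ∧ (j : ℕ) < r)) →
        Lten g gb x i j = 0) ∧
      -- the entries of the block `L₁` do not depend on the `y`-variables
      (∀ i j : Fin n, (i : ℕ) < r → (j : ℕ) < r →
        ∀ m : Fin n, r ≤ (m : ℕ) → pd m (fun y => Lten g gb y i j) x = 0) ∧
      -- the entries of the block `L₂` do not depend on the `x`-variables
      (∀ i j : Fin n, r ≤ (i : ℕ) → r ≤ (j : ℕ) →
        ∀ m : Fin n, (m : ℕ) < r → pd m (fun y => Lten g gb y i j) x = 0) := by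
  intro x hx
  have h₁ : ∀ y ∈ U, ∀ v, aeval (Lten g gb y) (chi1 y) *ᵥ v = 0 ↔
      ∀ i : Fin n, ¬ (i : ℕ) < r → v i = 0 := fun y hy v => by
    rw [← mem_span_single_iff (fun i : Fin n => (i : ℕ) < r)]
    exact (SetLike.ext_iff.1 (hD1 y hy) v)
  have h₂ : ∀ y ∈ U, ∀ v, aeval (Lten g gb y) (chi2 y) *ᵥ v = 0 ↔
      ∀ i : Fin n, ¬ r ≤ (i : ℕ) → v i = 0 := fun y hy v => by
    rw [← mem_span_single_iff (fun i : Fin n => r ≤ (i : ℕ))]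
    exact (SetLike.ext_iff.1 (hD2 y hy) v)
  obtain ⟨hb₁, hb₂, hd₁⟩ := hge.Lten_block hU hg hgb h₁ (by simpa only [not_le] using h₂) hx
  obtain ⟨-, -, hd₂⟩ := hge.Lten_block hU hg hgb h₂ (by simpa only [not_lt] using h₁) hx
  refine ⟨?_, fun i j hi hj m hm => hd₁ i j m hi hj (not_lt.2 hm),
    fun i j hi hj m hm => hd₂ i j m hi hj (not_le.2 hm)⟩
  rintro i j (⟨hi, hj⟩ | ⟨hi, hj⟩)
  · exact hb₂ i j hi (not_lt.2 hj)
  · exact hb₁ i j (not_lt.2 hi) hj
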